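/- For all k, ℓ ∈ ℕ, β_{3k} > β_{3ℓ} if and only if k ⊳ ℓ in the Sharkovskii ordering. -/

import Mathlib

open Filter Set

noncomputable section

namespace FatSierpinski

/-- The digit set Ω = {(0,0),(1,0),(0,1)} ⊆ ℝ². -/
def OmegaR : Set (ℝ × ℝ) := {(0, 0), (1, 0), (0, 1)}

/-- The fat Sierpinski gasket `S_β` (sequences are 0-indexed: `d i` is the digit d_{i+1}). -/
def Sfat (β : ℝ) : Set (ℝ × ℝ) :=
  {x | ∃ d : ℕ → ℝ × ℝ, (∀ i, d i ∈ OmegaR) ∧ x = ∑' i : ℕ, (β ^ (i + 1))⁻¹ • d i}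

/-- The convex hull `Δ_β` of `S_β`. -/
def Delta (β : ℝ) : Set (ℝ × ℝ) := convexHull ℝ (Sfat β)

/-- The map `f_d(x) = (x + d)/β`. -/
def fmap (β : ℝ) (d : ℝ × ℝ) (x : ℝ × ℝ) : ℝ × ℝ := β⁻¹ • (x + d)

/-- The overlap region `O_β = ⋃_{c ≠ d ∈ Ω} f_c(Δ_β) ∩ f_d(Δ_β)`. -/
def Ofat (β : ℝ) : Set (ℝ × ℝ) :=
  ⋃ c ∈ OmegaR, ⋃ d ∈ OmegaR, ⋃ (_ : c ≠ d), (fmap β c '' Delta β) ∩ (fmap β d '' Delta β)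

/-- The univoque set of codings `𝐔_β`. -/
def Ufat (β : ℝ) : Set (ℕ → ℝ × ℝ) :=
  {d | (∀ i, d i ∈ OmegaR) ∧
    ∀ n : ℕ, (∑' i : ℕ, (β ^ (i + 1))⁻¹ • d (n + i)) ∉ Ofat β}

/-- `d` has smallest period `k`. -/
def SmallestPeriod {α : Type*} (d : ℕ → α) (k : ℕ) : Prop :=
  0 < k ∧ (∀ i, d (i + k) = d i) ∧ ∀ j, 0 < j → j < k → ∃ i, d (i + j) ≠ d i

/-- The critical base `β_k`. -/
def betaK (k : ℕ) : ℝ :=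
  sInf {β : ℝ | β ∈ Set.Ioc (1 : ℝ) 2 ∧ ∃ d ∈ Ufat β, SmallestPeriod d k}

/-- Strict lexicographic order on sequences. -/
def seqLT {α : Type*} [Preorder α] (a b : ℕ → α) : Prop :=
  ∃ n, (∀ i < n, a i = b i) ∧ a n < b n

/-- Weak lexicographic order on sequences. -/
def seqLE {α : Type*} [Preorder α] (a b : ℕ → α) : Prop :=
  seqLT a b ∨ a = b

/-- `a` is a 0-1 sequence. -/
def IsBinary (a : ℕ → ℕ) : Prop := ∀ i, a i ≤ 1

/-- `a` does not end with `0^∞`. -/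
def NotEndInZeros (a : ℕ → ℕ) : Prop := ∀ N, ∃ i, N ≤ i ∧ a i ≠ 0

/-- `∑_{i=1}^∞ a_i β^{-i} = 1` (0-indexed: `a i` is a_{i+1}). -/
def SumsToOne (β : ℝ) (a : ℕ → ℕ) : Prop :=
  ∑' i : ℕ, (a i : ℝ) / β ^ (i + 1) = 1

/-- `a` is the quasi-greedy β-expansion of 1: the lexicographically largest
binary sequence not ending in `0^∞` whose value in base β is 1. -/
def IsQuasiGreedy (β : ℝ) (a : ℕ → ℕ) : Prop :=
  IsBinary a ∧ NotEndInZeros a ∧ SumsToOne β a ∧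
    ∀ b : ℕ → ℕ, IsBinary b → NotEndInZeros b → SumsToOne β b → seqLE b a

/-- `w⁺`: replace the final digit 0 of a block by 1. -/
def plusBlock (w : List ℕ) : List ℕ := w.dropLast ++ [1]

/-- `Θ` flips the outer digits of every consecutive triple
(000↦101, 001↦100, 100↦001, 101↦000). -/
def thetaBlock (w : List ℕ) : List ℕ :=
  w.mapIdx fun i x => if i % 3 = 1 then x else 1 - x

/-- `tB n` is the block `t_{n+1}`: `t_1 = 100`, `t_{n+1} = t_n⁺ Θ(t_n⁺)`. -/
def tB : ℕ → List ℕ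
  | 0 => [1, 0, 0]
  | n + 1 => plusBlock (tB n) ++ thetaBlock (plusBlock (tB n))

/-- The sequence `u w^∞` (the block `u` followed by `w` repeated forever). -/
def prefixPeriodic (u w : List ℕ) : ℕ → ℕ := fun i =>
  if i < u.length then u.getD i 0 else w.getD ((i - u.length) % w.length) 0

/-- The periodic sequence `w^∞`. -/
def periodicSeq (w : List ℕ) : ℕ → ℕ := fun i => w.getD (i % w.length) 0

/-- The componentwise limit `λ = 101001000101…` of the blocks `t_n`
(the digit `λ_{i+1}` has stabilized in `t_{i+2} = tB (i+1)`). -/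
def lamSeq : ℕ → ℕ := fun i => (tB (i + 1)).getD i 0

/-- `β_c` is the unique base in (1,2] with `∑ λ_i β^{-i} = 1`. -/
def IsBetaC (β : ℝ) : Prop := β ∈ Set.Ioc (1 : ℝ) 2 ∧ SumsToOne β lamSeq

/-- The sequence `t_{n+2}⁺ (Θ(t_{n+2}))^∞`, the quasi-greedy expansion of 1 for `β̂_n`. -/
def hatSeq (n : ℕ) : ℕ → ℕ :=
  prefixPeriodic (plusBlock (tB (n + 1))) (thetaBlock (tB (n + 1)))

/-- The Sharkovskii ordering `k ⊳ ℓ` on positive integers. -/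
def Sharkovskii (k l : ℕ) : Prop :=
  ∃ a b c d : ℕ, k = 2 ^ a * (2 * b + 1) ∧ l = 2 ^ c * (2 * d + 1) ∧ k ≠ l ∧
    ((1 ≤ b ∧ d = 0) ∨ (1 ≤ b ∧ 1 ≤ d ∧ (a < c ∨ (a = c ∧ b < d))) ∨
      (b = 0 ∧ d = 0 ∧ c < a))

/-- The digit set Ω as pairs of naturals (for combinatorial statements). -/
def OmegaD : Set (ℕ × ℕ) := {(0, 0), (1, 0), (0, 1)}

/-- The periodic extension `(d_1 … d_k)^∞` of a block. -/
def cyc (d : List (ℕ × ℕ)) : ℕ → ℕ × ℕ := fun i => d.getD (i % d.length) (0, 0)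

/-- Strict lexicographic order on lists. -/
def listLT (u v : List ℕ) : Prop := List.Lex (· < ·) u v

/-- Weak lexicographic order on lists. -/
def listLE (u v : List ℕ) : Prop := listLT u v ∨ u = v

/-- The first components `d_1¹ … d_k¹` of a block over Ω. -/
def comp1 (d : List (ℕ × ℕ)) : List ℕ := d.map Prod.fst

/-- The second components `d_1² … d_k²` of a block over Ω. -/
def comp2 (d : List (ℕ × ℕ)) : List ℕ := d.map Prod.snd

/-- The digits `(1 - d_1⁺) … (1 - d_k⁺)` where `d⁺ = d¹ + d²`. -/
def comp3 (d : List (ℕ × ℕ)) : List ℕ := d.map fun x => 1 - x.1 - x.2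

/-- Cyclic shift of a list by `j`. -/
def rot {α : Type*} (j : ℕ) (l : List α) : List α := l.drop j ++ l.take j

/-- `d` is a representation of the binary block `a`. -/
def IsRepresentation (a : List ℕ) (d : List (ℕ × ℕ)) : Prop :=
  d.length = a.length ∧ (∀ x ∈ d, x ∈ OmegaD) ∧
  SmallestPeriod (cyc d) a.length ∧
  comp1 d = a ∧ listLE (comp3 d) (comp2 d) ∧ listLE (comp2 d) a ∧
  ∀ j < a.length,
    listLE (comp1 (rot j d)) a ∧ listLE (comp2 (rot j d)) a ∧ listLE (comp3 (rot j d)) a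

/-- A binary block is admissible if it has a representation. -/
def IsAdmissible (a : List ℕ) : Prop := ∃ d, IsRepresentation a d

/-- The `i`-th consecutive triple of a block (0-indexed). -/
def tripleAt (a : List ℕ) (i : ℕ) : List ℕ :=
  [a.getD (3 * i) 0, a.getD (3 * i + 1) 0, a.getD (3 * i + 2) 0]

/-- The edges of the directed graph on {000, 001, 100, 101} defining the subshift `X`. -/
def XEdge (u v : List ℕ) : Prop :=
  (u, v) ∈ ({([1,0,1], [0,0,1]), ([1,0,1], [0,0,0]), ([0,0,1], [0,0,0]),
             ([0,0,0], [1,0,1]), ([0,0,0], [1,0,0]), ([1,0,0], [1,0,1])} :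
      Set (List ℕ × List ℕ))



/-! ### Lexicographic order on binary sequences -/

/-- strict lexicographic order on `ℕ → Bool` -/
def blt (a b : ℕ → Bool) : Prop :=
  ∃ n, (∀ i < n, a i = b i) ∧ a n = false ∧ b n = true

/-- weak lexicographic order -/
def ble (a b : ℕ → Bool) : Prop := blt a b ∨ a = b

lemma blt_or (a b : ℕ → Bool) : blt a b ∨ a = b ∨ blt b a := by
  classical
  by_cases h : a = b
  · exact Or.inr (Or.inl h)
  · have h' : ∃ n, a n ≠ b n := by
      by_contra hc
      push Not at hc
      exact h (funext hc)
    have h1 := Nat.find_spec h'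
    have h2 : ∀ i < Nat.find h', a i = b i := fun i hi => by
      have := Nat.find_min h' hi
      simpa using this
    cases ha : a (Nat.find h') <;> cases hb : b (Nat.find h')
    · simp [ha, hb] at h1
    · exact Or.inl ⟨_, h2, ha, hb⟩
    · exact Or.inr (Or.inr ⟨_, fun i hi => (h2 i hi).symm, hb, ha⟩)
    · simp [ha, hb] at h1

lemma blt_of_not_ble {a b : ℕ → Bool} (h : ¬ ble a b) : blt b a := by
  rcases blt_or a b with h1 | h1 | h1
  · exact absurd (Or.inl h1) h
  · exact absurd (Or.inr h1) h
  · exact h1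

lemma blt_trans {a b c : ℕ → Bool} (h1 : blt a b) (h2 : blt b c) : blt a c := by
  obtain ⟨n, hn, hn1, hn2⟩ := h1
  obtain ⟨m, hm, hm1, hm2⟩ := h2
  rcases lt_trichotomy n m with h | h | h
  · exact ⟨n, fun i hi => (hn i hi).trans (hm i (hi.trans h)), hn1, by rw [← hm n h]; exact hn2⟩
  · subst h
    rw [hn2] at hm1
    cases hm1
  · exact ⟨m, fun i hi => (hn i (hi.trans h)).trans (hm i hi), by rw [hn m h]; exact hm1, hm2⟩

lemma blt_irrefl (a : ℕ → Bool) : ¬ blt a a := by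
  rintro ⟨n, _, h1, h2⟩
  rw [h1] at h2
  cases h2

lemma ble_trans {a b c : ℕ → Bool} (h1 : ble a b) (h2 : ble b c) : ble a c := by
  rcases h1 with h1 | rfl
  · rcases h2 with h2 | rfl
    · exact Or.inl (blt_trans h1 h2)
    · exact Or.inl h1
  · exact h2

lemma blt_of_blt_of_ble {a b c : ℕ → Bool} (h1 : blt a b) (h2 : ble b c) : blt a c := by
  rcases h2 with h2 | rfl
  · exact blt_trans h1 h2
  · exact h1

lemma blt_of_ble_of_blt {a b c : ℕ → Bool} (h1 : ble a b) (h2 : blt b c) : blt a c := by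
  rcases h1 with h1 | rfl
  · exact blt_trans h1 h2
  · exact h2

lemma ble_antisymm {a b : ℕ → Bool} (h1 : ble a b) (h2 : ble b a) : a = b := by
  rcases h1 with h1 | h1
  · exact absurd (blt_of_blt_of_ble h1 h2) (blt_irrefl a)
  · exact h1

lemma zero_ble (a : ℕ → Bool) : ble (fun _ => false) a := by
  rcases blt_or (fun _ => false) a with h | h | h
  · exact Or.inl h
  · exact Or.inr h
  · obtain ⟨n, _, _, h2⟩ := h
    cases h2

lemma ble_one (a : ℕ → Bool) : ble a (fun _ => true) := by
  rcases blt_or a (fun _ => true) with h | h | h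
  · exact Or.inl h
  · exact Or.inr h
  · obtain ⟨n, _, h2, _⟩ := h
    cases h2

/-! ### The combinatorial operators -/

/-- shift -/
def sh {α : Type*} (p : ℕ) (y : ℕ → α) : ℕ → α := fun i => y (p + i)

/-- tail after `n`, reflected according to the `n`-th digit -/
def ee (y : ℕ → Bool) (n : ℕ) : ℕ → Bool := fun i => xor (y n) (y (n + 1 + i))

/-- `w ↦ w₀ w̄₀ w₁ w̄₁ …` -/
def DD (w : ℕ → Bool) : ℕ → Bool := fun i => if i % 2 = 0 then w (i / 2) else !(w (i / 2))

/-- prepend a one -/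
def c1 (v : ℕ → Bool) : ℕ → Bool := fun i => if i = 0 then true else v (i - 1)

/-- the sequence `1(10)^∞` -/
def s0 : ℕ → Bool := fun j => decide (j = 0 ∨ j % 2 = 1)

/-- `v ↦ 1 0 v₀ v̄₀ 0 v₁ v̄₁ 0 …` -/
def Phi (v : ℕ → Bool) : ℕ → Bool := fun i =>
  if i = 0 then true else if i % 3 = 1 then false else if i % 3 = 2 then v (i / 3)
  else !(v (i / 3 - 1))

/-- the extremal sequences -/
def nu : ℕ → ℕ → (ℕ → Bool)
  | 0, b => if b = 0 then fun _ => false else fun j => s0 (j % (2 * b + 1))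
  | a + 1, b => c1 (DD (nu a b))

lemma DD_even (w : ℕ → Bool) (i : ℕ) : DD w (2 * i) = w i := by
  simp [DD]

lemma DD_odd (w : ℕ → Bool) (i : ℕ) : DD w (2 * i + 1) = !(w i) := by
  have : (2 * i + 1) / 2 = i := by omega
  simp [DD, this, Nat.add_mod]

lemma c1_zero (v : ℕ → Bool) : c1 v 0 = true := rfl

lemma c1_succ (v : ℕ → Bool) (i : ℕ) : c1 v (i + 1) = v i := by simp [c1]

lemma DD_blt {v w : ℕ → Bool} (h : blt v w) : blt (DD v) (DD w) := by
  obtain ⟨n, hn, h1, h2⟩ := h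
  refine ⟨2 * n, fun i hi => ?_, by rw [DD_even, h1], by rw [DD_even, h2]⟩
  unfold DD
  rw [hn (i / 2) (by omega)]

lemma c1_blt {v w : ℕ → Bool} (h : blt v w) : blt (c1 v) (c1 w) := by
  obtain ⟨n, hn, h1, h2⟩ := h
  refine ⟨n + 1, fun i hi => ?_, by rw [c1_succ, h1], by rw [c1_succ, h2]⟩
  unfold c1
  split_ifs
  · rfl
  · exact hn _ (by omega)

lemma Phi_blt {v w : ℕ → Bool} (h : blt v w) : blt (Phi v) (Phi w) := by
  obtain ⟨n, hn, h1, h2⟩ := h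
  have e1 : (3 * n + 2) % 3 = 2 := by omega
  have e2 : (3 * n + 2) / 3 = n := by omega
  refine ⟨3 * n + 2, fun i hi => ?_, by simp [Phi, e1, e2, h1], by simp [Phi, e1, e2, h2]⟩
  unfold Phi
  split_ifs
  · rfl
  · rfl
  · exact hn _ (by omega)
  · rw [hn _ (by omega)]

lemma Phi_ble {v w : ℕ → Bool} (h : ble v w) : ble (Phi v) (Phi w) := by
  rcases h with h | rfl
  · exact Or.inl (Phi_blt h)
  · exact Or.inr rfl

lemma cD_ble {v w : ℕ → Bool} (h : ble v w) : ble (c1 (DD v)) (c1 (DD w)) := by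
  rcases h with h | rfl
  · exact Or.inl (c1_blt (DD_blt h))
  · exact Or.inr rfl

lemma cD_one : c1 (DD (fun _ => true)) = s0 := by
  funext j
  rcases j with _ | j
  · rfl
  · rw [c1_succ]
    simp only [DD, s0]
    rcases Nat.mod_two_eq_zero_or_one j with h | h
    · have : (j + 1) % 2 = 1 := by omega
      simp [h, this]
    · have : (j + 1) % 2 = 0 := by omega
      simp [h, this]

/-- the odd extremal sequence -/
lemma nu_odd {b : ℕ} (hb : 1 ≤ b) : nu 0 b = fun j => s0 (j % (2 * b + 1)) := by
  have : b ≠ 0 := by omega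
  simp [nu, this]

lemma nu_zero_zero : nu 0 0 = fun _ => false := by simp [nu]

lemma nu_head {a b : ℕ} (h : a ≠ 0 ∨ b ≠ 0) : nu a b 0 = true := by
  rcases a with _ | a
  · have hb : 1 ≤ b := by omega
    rw [nu_odd hb]
    simp [s0]
  · rfl

lemma s0_blt_odd {b : ℕ} (hb : 1 ≤ b) : blt s0 (nu 0 b) := by
  rw [nu_odd hb]
  refine ⟨2 * b + 2, fun i hi => ?_, ?_, ?_⟩
  · rcases Nat.lt_or_ge i (2 * b + 1) with h | h
    · simp only [Nat.mod_eq_of_lt h]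
    · have : i = 2 * b + 1 := by omega
      subst this
      simp only [Nat.mod_self]
      simp [s0, Nat.add_mod]
  · have : (2 * b + 2) % 2 = 0 := by omega
    simp [s0, this]
  · have : (2 * b + 2) % (2 * b + 1) = 1 := by
      rw [show 2 * b + 2 = 1 + (2 * b + 1) by ring, Nat.add_mod_right]
      exact Nat.mod_eq_of_lt (by omega)
    simp [this, s0]

lemma nu_even_le (a b : ℕ) : ble (nu (a + 1) b) s0 := by
  rw [← cD_one]
  exact cD_ble (ble_one _)

lemma nu_odd_lt {b d : ℕ} (hb : 1 ≤ b) (h : b < d) : blt (nu 0 d) (nu 0 b) := by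
  rw [nu_odd hb, nu_odd (by omega : 1 ≤ d)]
  refine ⟨2 * b + 2, fun i hi => ?_, ?_, ?_⟩
  · have h3 : i % (2 * d + 1) = i := Nat.mod_eq_of_lt (by omega)
    rcases Nat.lt_or_ge i (2 * b + 1) with h | h
    · simp only [Nat.mod_eq_of_lt h, h3]
    · have : i = 2 * b + 1 := by omega
      subst this
      simp only [Nat.mod_self, h3]
      simp [s0, Nat.add_mod]
  · have h3 : (2 * b + 2) % (2 * d + 1) = 2 * b + 2 := Nat.mod_eq_of_lt (by omega)
    have : (2 * b + 2) % 2 = 0 := by omega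
    simp [s0, this, h3]
  · have : (2 * b + 2) % (2 * b + 1) = 1 := by
      rw [show 2 * b + 2 = 1 + (2 * b + 1) by ring, Nat.add_mod_right]
      exact Nat.mod_eq_of_lt (by omega)
    simp [this, s0]

lemma nu_le_three (a b : ℕ) : ble (nu a b) (nu 0 1) := by
  rcases a with _ | a
  · rcases Nat.lt_trichotomy b 1 with h | h | h
    · have : b = 0 := by omega
      subst this
      rw [nu_zero_zero]
      exact zero_ble _
    · subst h
      exact Or.inr rfl
    · exact Or.inl (nu_odd_lt le_rfl h)
  · exact Or.inl (blt_of_ble_of_blt (nu_even_le a b) (s0_blt_odd le_rfl))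

/-- the order relation on parameters implies the lexicographic order -/
lemma nu_order : ∀ (a c b d : ℕ),
    ((1 ≤ b ∧ d = 0) ∨ (1 ≤ b ∧ 1 ≤ d ∧ (a < c ∨ (a = c ∧ b < d))) ∨
      (b = 0 ∧ d = 0 ∧ c < a)) → blt (nu c d) (nu a b) := by
  intro a
  induction a with
  | zero =>
    intro c b d h
    rcases c with _ | c
    · rcases h with ⟨h1, rfl⟩ | ⟨h1, h2, h3⟩ | ⟨_, _, h⟩
      · rw [nu_zero_zero]
        exact ⟨0, by simp, rfl, nu_head (by omega)⟩
      · exact nu_odd_lt h1 (by omega)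
      · omega
    · exact blt_of_ble_of_blt (nu_even_le c d) (s0_blt_odd (by omega))
  | succ a ih =>
    intro c b d h
    rcases c with _ | c
    · have : d = 0 := by omega
      subst this
      rw [nu_zero_zero]
      exact ⟨0, by simp, rfl, nu_head (by omega)⟩
    · exact c1_blt (DD_blt (ih c b d (by omega)))

/-! ### Binary sequences: lower and upper bounds -/

lemma per_mul {α : Type*} {y : ℕ → α} {k : ℕ} (h : ∀ i, y (i + k) = y i) (m i : ℕ) :
    y (i + k * m) = y i := by
  induction m with
  | zero => simp
  | succ m ih => rw [Nat.mul_succ, ← Nat.add_assoc, h, ih]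

lemma sh_period {α : Type*} {y : ℕ → α} {k : ℕ} (h : SmallestPeriod y k) (p : ℕ) :
    SmallestPeriod (sh p y) k := by
  obtain ⟨h0, h1, h2⟩ := h
  refine ⟨h0, fun i => ?_, fun j hj hjk => ?_⟩
  · unfold sh
    rw [← Nat.add_assoc, h1]
  · obtain ⟨i, hi⟩ := h2 j hj hjk
    refine ⟨i + (k * p - p), fun hc => hi ?_⟩
    have hp : p ≤ k * p := Nat.le_mul_of_pos_left p h0
    unfold sh at hc
    rw [show p + (i + (k * p - p) + j) = (i + j) + k * p by omega,
      show p + (i + (k * p - p)) = i + k * p by omega, per_mul h1, per_mul h1] at hc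
    exact hc

/-- a periodic sequence in which repetitions propagate backwards is constant -/
lemma const_of_back {α : Type*} {y : ℕ → α} {k : ℕ} (hk : 0 < k) (h : ∀ i, y (i + k) = y i)
    (hb : ∀ n, y (n + 1) = y (n + 2) → y n = y (n + 1)) {p : ℕ} (hp : y p = y (p + 1)) :
    ∀ i, y (i + 1) = y i := by
  have key : ∀ m n, y (n + m) = y (n + m + 1) → y n = y (n + 1) := by
    intro m
    induction m with
    | zero => intro n hn; exact hn
    | succ m ih =>
      intro n hn
      apply ih n
      apply hb
      exact hn
  intro i
  have hle : i ≤ k * i := Nat.le_mul_of_pos_left i hk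
  refine (key (p + (k * i - i)) i ?_).symm
  rw [show i + (p + (k * i - i)) + 1 = (p + 1) + k * i by omega,
    show i + (p + (k * i - i)) = p + k * i by omega, per_mul h, per_mul h, hp]

lemma exists_start {α : Type*} {y : ℕ → α} {k : ℕ} (hk : SmallestPeriod y k) (hk2 : 2 ≤ k)
    {p : ℕ} (hp : y p = y (p + 1)) : ∃ n, y n ≠ y (n + 1) ∧ y (n + 1) = y (n + 2) := by
  by_contra hc
  push Not at hc
  have := const_of_back hk.1 hk.2.1 (fun n hn => by
    by_contra h
    exact hc n h hn) hp
  obtain ⟨i, hi⟩ := hk.2.2 1 one_pos (by omega)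
  exact hi (this i)

/-- if all reflected tails are below `1(10)^∞` then the sequence is desubstitutable -/
lemma desub {y : ℕ → Bool} {k : ℕ} (hk : SmallestPeriod y k) (hk2 : 2 ≤ k)
    (h : ∀ n, blt (ee y n) s0) : ∃ p w, sh p y = DD w := by
  suffices H : ∃ p, ∀ i, y (p + 2 * i) ≠ y (p + 2 * i + 1) by
    obtain ⟨p, hp⟩ := H
    refine ⟨p, fun i => y (p + 2 * i), funext fun i => ?_⟩
    unfold sh DD
    rcases Nat.even_or_odd' i with ⟨c, rfl | rfl⟩
    · simp
    · have e : (2 * c + 1) / 2 = c := by omega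
      have := hp c
      have e' : ¬ ((2 * c + 1) % 2 = 0) := by omega
      rw [if_neg e', e, ← Nat.add_assoc]
      show y (p + 2 * c + 1) = !(y (p + 2 * c))
      revert this
      cases y (p + 2 * c) <;> cases y (p + 2 * c + 1) <;> simp
  by_cases hr : ∃ p, y p = y (p + 1)
  swap
  · push Not at hr
    exact ⟨0, fun i => hr _⟩
  obtain ⟨p, hp⟩ := hr
  obtain ⟨n, hn1, hn2⟩ := exists_start hk hk2 hp
  -- the next repetition
  have next : ∀ n, y n ≠ y (n + 1) → y (n + 1) = y (n + 2) →
      ∃ i, (∀ j, 1 ≤ j → j < 2 * i + 2 → y (n + 1 + j) ≠ y (n + 1 + j + 1)) ∧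
        y (n + 1 + (2 * i + 2)) = y (n + 1 + (2 * i + 3)) := by
    intro n h1 h2
    obtain ⟨m, hm, hm1, hm2⟩ := h n
    have hm0 : m ≠ 0 := by
      rintro rfl
      simp only [ee] at hm1
      simp at hm1
      exact h1 hm1
    have hm1' : m ≠ 1 := by
      rintro rfl
      simp only [ee] at hm1
      rw [show n + 1 + 1 = n + 2 by ring, ← h2] at hm1
      simp at hm1
      exact h1 hm1
    have hodd : m % 2 = 1 := by
      simp [s0] at hm2
      omega
    refine ⟨(m - 3) / 2, fun j hj1 hj2 => ?_, ?_⟩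
    · have e1 := hm j (by omega)
      have e2 := hm (j + 1) (by omega)
      simp only [ee, s0] at e1 e2
      intro hc
      rw [← Nat.add_assoc, ← hc, e1] at e2
      rw [decide_eq_decide] at e2
      omega
    · have e1 := hm (m - 1) (by omega)
      rw [show 2 * ((m - 3) / 2) + 2 = m - 1 by omega, show 2 * ((m - 3) / 2) + 3 = m by omega]
      have e3 : s0 (m - 1) = false := by
        simp [s0]
        omega
      rw [e3] at e1
      simp only [ee] at e1 hm1
      simp at e1 hm1
      rw [← e1, ← hm1]
  have main : ∀ t n, y n ≠ y (n + 1) → y (n + 1) = y (n + 2) →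
      y (n + 2 + 2 * t) ≠ y (n + 2 + 2 * t + 1) := by
    intro t
    induction t using Nat.strong_induction_on with
    | _ t ih =>
      intro n h1 h2
      obtain ⟨i, hi1, hi2⟩ := next n h1 h2
      rcases Nat.lt_or_ge t (i + 1) with ht | ht
      · have := hi1 (2 * t + 1) (by omega) (by omega)
        rw [show n + 1 + (2 * t + 1) = n + 2 + 2 * t by ring] at this
        exact this
      · have a1 := hi1 (2 * i + 1) (by omega) (by omega)
        have := ih (t - (i + 1)) (by omega) (n + 1 + (2 * i + 1)) a1 (by
          rw [show n + 1 + (2 * i + 1) + 1 = n + 1 + (2 * i + 2) by ring,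
            show n + 1 + (2 * i + 1) + 2 = n + 1 + (2 * i + 3) by ring]
          exact hi2)
        rw [show n + 1 + (2 * i + 1) + 2 + 2 * (t - (i + 1)) = n + 2 + 2 * t by omega] at this
        exact this
  exact ⟨n + 2, fun i => main i n hn1 hn2⟩

/-- if `DD w` has an odd period, it is alternating -/
lemma DD_odd_period {w : ℕ → Bool} {k : ℕ} (hodd : k % 2 = 1) (h : ∀ i, DD w (i + k) = DD w i) :
    ∀ i, DD w (i + 1) = !(DD w i) := by
  intro i
  rcases Nat.even_or_odd' i with ⟨c, rfl | rfl⟩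
  · rw [DD_odd, DD_even]
  · have e1 := h (2 * c + 1)
    have e2 := h (2 * c + 1 + 1)
    rw [← e1, ← e2, show 2 * c + 1 + 1 + k = 2 * (c + 1 + k / 2) + 1 by omega,
      show 2 * c + 1 + k = 2 * (c + 1 + k / 2) by omega, DD_odd, DD_even]

lemma alt_odd {y : ℕ → Bool} (h : ∀ i, y (i + 1) = !(y i)) (m i : ℕ) :
    y (i + 2 * m) = y i := by
  induction m with
  | zero => rfl
  | succ m ih =>
    rw [show i + 2 * (m + 1) = i + 2 * m + 1 + 1 by ring, h, h, ih]
    simp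

lemma DD_period_iff {w : ℕ → Bool} {m : ℕ} :
    SmallestPeriod (DD w) (2 * m) ↔ SmallestPeriod w m := by
  have per : ∀ j, (∀ i, DD w (i + 2 * j) = DD w i) ↔ (∀ i, w (i + j) = w i) := by
    intro j
    constructor
    · intro h i
      have := h (2 * i)
      rwa [← Nat.mul_add, DD_even, DD_even] at this
    · intro h i
      unfold DD
      rw [show (i + 2 * j) % 2 = i % 2 by omega, show (i + 2 * j) / 2 = i / 2 + j by omega, h]
  constructor
  · rintro ⟨h0, h1, h2⟩
    refine ⟨by omega, (per m).1 h1, fun j hj hjm => ?_⟩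
    by_contra hc
    push Not at hc
    obtain ⟨i, hi⟩ := h2 (2 * j) (by omega) (by omega)
    exact hi ((per j).2 hc i)
  · rintro ⟨h0, h1, h2⟩
    refine ⟨by omega, (per m).2 h1, fun j hj hjm => ?_⟩
    by_contra hc
    push Not at hc
    rcases Nat.even_or_odd' j with ⟨c, rfl | rfl⟩
    · obtain ⟨i, hi⟩ := h2 c (by omega) (by omega)
      exact hi ((per c).1 hc i)
    · have halt := DD_odd_period (by omega) hc
      have := hc 0
      rw [show 0 + (2 * c + 1) = (0 + 1) + 2 * c by ring, alt_odd halt, halt] at this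
      simp at this

lemma ee_sh (y : ℕ → Bool) (p n : ℕ) : ee (sh p y) n = ee y (p + n) := by
  funext i
  unfold ee sh
  rw [show p + (n + 1 + i) = p + n + 1 + i by ring]

lemma ee_DD_even (w : ℕ → Bool) (n : ℕ) : ee (DD w) (2 * n) = c1 (DD (ee w n)) := by
  funext i
  rcases i with _ | i
  · simp only [ee]
    rw [Nat.add_zero, DD_even, DD_odd, c1_zero]
    simp
  · rw [c1_succ]
    simp only [ee]
    rcases Nat.even_or_odd' i with ⟨c, rfl | rfl⟩
    · rw [DD_even, DD_even, show 2 * n + 1 + (2 * c + 1) = 2 * (n + 1 + c) by ring, DD_even]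
      rfl
    · rw [DD_even, DD_odd, show 2 * n + 1 + (2 * c + 1 + 1) = 2 * (n + 1 + c) + 1 by ring, DD_odd]
      simp [ee]

/-- lower bound -/
lemma nu_lower : ∀ (a b : ℕ) (y : ℕ → Bool), SmallestPeriod y (2 ^ a * (2 * b + 1)) →
    ∃ n, ble (nu a b) (ee y n) := by
  intro a
  induction a with
  | zero =>
    intro b y hy
    rcases Nat.eq_zero_or_pos b with rfl | hb
    · exact ⟨0, by rw [nu_zero_zero]; exact zero_ble _⟩
    by_contra hc
    push Not at hc
    have hy' : SmallestPeriod y (2 * b + 1) := by simpa using hy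
    have hlt : ∀ n, blt (ee y n) s0 := by
      intro n
      have h1 := blt_of_not_ble (hc n)
      rw [nu_odd hb] at h1
      obtain ⟨m, hm, hm1, hm2⟩ := h1
      have hper : ∀ i, ee y n (i + (2 * b + 1)) = ee y n i := by
        intro i
        simp only [ee]
        rw [← Nat.add_assoc (n + 1), hy'.2.1]
      have hmk : m < 2 * b + 1 := by
        by_contra hge
        have e1 := hm (m - (2 * b + 1)) (by omega)
        have e2 := hper (m - (2 * b + 1))
        rw [show m - (2 * b + 1) + (2 * b + 1) = m by omega] at e2
        rw [← e2, hm1] at e1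
        simp only at e1 hm2
        rw [show m = m - (2 * b + 1) + (2 * b + 1) by omega, Nat.add_mod_right, ← e1] at hm2
        cases hm2
      refine ⟨m, fun i hi => ?_, hm1, ?_⟩
      · rw [hm i hi]
        simp only
        rw [Nat.mod_eq_of_lt (hi.trans hmk)]
      · simp only at hm2
        rwa [Nat.mod_eq_of_lt hmk] at hm2
    obtain ⟨p, w, hw⟩ := desub hy' (by omega) hlt
    have hz := sh_period hy' p
    rw [hw] at hz
    have halt := DD_odd_period (by omega) hz.2.1
    have := hz.2.1 0
    rw [show 0 + (2 * b + 1) = (0 + 1) + 2 * b by ring, alt_odd halt, halt] at this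
    simp at this
  | succ a ih =>
    intro b y hy
    by_contra hc
    push Not at hc
    have hlt : ∀ n, blt (ee y n) s0 := fun n =>
      blt_of_blt_of_ble (blt_of_not_ble (hc n)) (nu_even_le a b)
    rw [show 2 ^ (a + 1) * (2 * b + 1) = 2 * (2 ^ a * (2 * b + 1)) by ring] at hy
    have hpos : 0 < 2 ^ a * (2 * b + 1) := by positivity
    obtain ⟨p, w, hw⟩ := desub hy (by omega) hlt
    have hz := sh_period hy p
    rw [hw, DD_period_iff] at hz
    obtain ⟨n, hn⟩ := ih b w hz
    apply hc (p + 2 * n)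
    rw [← ee_sh, hw, ee_DD_even]
    exact cD_ble hn

lemma blt_head {x v : ℕ → Bool} (h1 : x 0 = false) (h2 : v 0 = true) : blt x v :=
  ⟨0, by simp, h1, h2⟩

/-- upper bound -/
lemma nu_upper : ∀ (a b : ℕ), ∃ y : ℕ → Bool, SmallestPeriod y (2 ^ a * (2 * b + 1)) ∧
    ∀ n, ble (ee y n) (nu a b) := by
  intro a
  induction a with
  | zero =>
    intro b
    rcases Nat.eq_zero_or_pos b with rfl | hb
    · refine ⟨fun _ => true, ⟨by norm_num, fun _ => rfl, fun j h1 h2 => ?_⟩, fun n => ?_⟩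
      · simp at h2
        omega
      · right
        rw [nu_zero_zero]
        funext i
        simp [ee]
    set k := 2 * b + 1 with hk
    have hkk : 2 ^ 0 * (2 * b + 1) = k := by rw [hk]; ring
    rw [hkk]
    set y := nu 0 b with hyd
    have hy : ∀ j, y j = s0 (j % k) := fun j => by rw [hyd, nu_odd hb]
    have hper : ∀ j, y (j + k) = y j := fun j => by rw [hy, hy, Nat.add_mod_right]
    have hrep : ∀ j, y j = y (j + 1) ↔ j % k = 0 := by
      intro j
      have hlt : j % k < k := Nat.mod_lt _ (by omega)
      rw [hy, hy, Nat.add_mod, Nat.mod_eq_of_lt (by omega : 1 < k)]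
      rcases Nat.lt_or_ge (j % k + 1) k with h | h
      · rw [Nat.mod_eq_of_lt h]
        simp only [s0, decide_eq_decide]
        omega
      · have : j % k = 2 * b := by omega
        rw [this, show 2 * b + 1 = k from rfl, Nat.mod_self]
        have hb0 : b ≠ 0 := by omega
        simp [s0, hb0]
    refine ⟨y, ⟨by omega, hper, fun j hj hjk => ?_⟩, fun n => ?_⟩
    · by_contra hc
      push Not at hc
      have h1 := hc 0
      have h2 := hc 1
      have h3 := (hrep 0).2 (by simp)
      have h4 := (hrep j).1 (by
        rw [Nat.zero_add] at h1
        rw [Nat.add_comm] at h2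
        rw [h1, h2]
        exact h3)
      rw [Nat.mod_eq_of_lt hjk] at h4
      omega
    · have hh : y 0 = true := nu_head (by omega)
      have hh1 : y 1 = true := by
        rw [← (hrep 0).2 (by simp)]
        exact hh
      by_cases h0 : y n = y (n + 1)
      · left
        apply blt_head _ hh
        simp [ee, h0]
      by_cases h1 : y (n + 1) = y (n + 2)
      · right
        have hm := (hrep (n + 1)).1 h1
        have hshift : ∀ i, y (n + 1 + i) = y i := by
          intro i
          rw [hy, hy, Nat.add_mod, hm, Nat.zero_add, Nat.mod_mod]
        have hn0 : y n = false := by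
          have := hshift 0
          rw [Nat.add_zero, hh] at this
          rw [this] at h0
          simpa using h0
        funext i
        simp [ee, hn0, hshift]
      · left
        have e0 : xor (y n) (y (n + 1)) = true := by simpa using h0
        have e1 : xor (y n) (y (n + 2)) = false := by
          revert h0 h1
          cases y n <;> cases y (n + 1) <;> cases y (n + 2) <;> simp
        refine ⟨1, fun i hi => ?_, e1, hh1⟩
        have : i = 0 := by omega
        subst this
        rw [hh]
        exact e0
  | succ a ih =>
    intro b
    obtain ⟨w, hw, hw2⟩ := ih b
    refine ⟨DD w, ?_, fun n => ?_⟩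
    · rw [show 2 ^ (a + 1) * (2 * b + 1) = 2 * (2 ^ a * (2 * b + 1)) by ring, DD_period_iff]
      exact hw
    rcases Nat.even_or_odd' n with ⟨c, rfl | rfl⟩
    · rw [ee_DD_even]
      exact cD_ble (hw2 c)
    by_cases hz : a = 0 ∧ b = 0
    · obtain ⟨rfl, rfl⟩ := hz
      right
      have hc : ∀ i, w i = w 0 := fun i => by
        have := per_mul hw.2.1 i 0
        simpa using this
      have hc' : ∀ i, ee w 0 i = false := fun i => by simp [ee, hc]
      have hDD : ∀ i, DD w (i + 1) = !(DD w i) := by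
        intro i
        rcases Nat.even_or_odd' i with ⟨c, rfl | rfl⟩
        · rw [DD_odd, DD_even]
        · rw [show 2 * c + 1 + 1 = 2 * (c + 1) by ring, DD_odd, DD_even, hc, hc c]
          simp
      have e1 : nu (0 + 1) 0 = ee (DD w) (2 * 0) := by
        rw [ee_DD_even]
        show c1 (DD (nu 0 0)) = _
        rw [nu_zero_zero]
        congr 2
        funext i
        rw [hc']
      rw [e1]
      funext i
      simp only [ee]
      rw [hDD (2 * c), show 2 * c + 1 + 1 + i = (2 * c + 1 + i) + 1 by ring, hDD (2 * c + 1 + i)]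
      rw [show 2 * c + 1 + i = (1 + i) + 2 * c by ring, alt_odd hDD]
      rw [show 2 * c = 0 + 2 * c by ring, alt_odd hDD]
      simp
    · have hh : nu a b 0 = true := nu_head (by omega)
      left
      have hv1 : nu (a + 1) b 1 = true := by
        show c1 (DD (nu a b)) (0 + 1) = true
        rw [c1_succ]
        exact hh
      by_cases h0 : ee (DD w) (2 * c + 1) 0 = true
      · refine ⟨1, fun i hi => ?_, ?_, hv1⟩
        · have : i = 0 := by omega
          subst this
          rw [h0]
          rfl
        · simp only [ee] at h0 ⊢
          rw [Nat.add_zero, show 2 * c + 1 + 1 = 2 * (c + 1) by ring, DD_odd, DD_even] at h0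
          rw [show 2 * c + 1 + 1 + 1 = 2 * (c + 1) + 1 by ring, DD_odd, DD_odd]
          revert h0
          cases w c <;> cases w (c + 1) <;> simp
      · exact blt_head (by simpa using h0) rfl

/-! ### Sequences over three letters -/

/-- indicator of the letter `j` from position `n` on -/
def ind (d : ℕ → Fin 3) (j : Fin 3) (n : ℕ) : ℕ → Bool := fun i => decide (d (n + i) = j)

/-- three-letter sequence coded by a binary sequence -/
def EE (A B C : Fin 3) (y : ℕ → Bool) : ℕ → Fin 3 := fun i =>
  if i % 3 = 0 then B else if i % 3 = 1 then (if y (i / 3) then A else C)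
  else (if y (i / 3) then C else A)

lemma EE0 (A B C : Fin 3) (y : ℕ → Bool) (n : ℕ) : EE A B C y (3 * n) = B := by
  simp [EE]

lemma EE1 (A B C : Fin 3) (y : ℕ → Bool) (n : ℕ) :
    EE A B C y (3 * n + 1) = if y n then A else C := by
  have e1 : (3 * n + 1) % 3 = 1 := by omega
  have e2 : (3 * n + 1) / 3 = n := by omega
  simp [EE, e1, e2]

lemma EE2 (A B C : Fin 3) (y : ℕ → Bool) (n : ℕ) :
    EE A B C y (3 * n + 2) = if y n then C else A := by
  have e1 : (3 * n + 2) % 3 = 2 := by omega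
  have e2 : (3 * n + 2) / 3 = n := by omega
  simp [EE, e1, e2]

lemma Phi0 (v : ℕ → Bool) : Phi v 0 = true := rfl

lemma Phi1 (v : ℕ → Bool) (n : ℕ) : Phi v (3 * n + 1) = false := by
  have e1 : (3 * n + 1) % 3 = 1 := by omega
  simp [Phi, e1]

lemma Phi2 (v : ℕ → Bool) (n : ℕ) : Phi v (3 * n + 2) = v n := by
  have e1 : (3 * n + 2) % 3 = 2 := by omega
  have e2 : (3 * n + 2) / 3 = n := by omega
  simp [Phi, e1, e2]

lemma Phi3 (v : ℕ → Bool) (n : ℕ) : Phi v (3 * n + 3) = !(v n) := by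
  have e1 : (3 * n + 3) % 3 = 0 := by omega
  simp [Phi, e1]

lemma three_cases (i : ℕ) : i = 0 ∨ ∃ c, i = 3 * c + 1 ∨ i = 3 * c + 2 ∨ i = 3 * c + 3 := by
  rcases Nat.eq_zero_or_pos i with h | h
  · exact Or.inl h
  · exact Or.inr ⟨(i - 1) / 3, by omega⟩

lemma EE_tail {A B C : Fin 3} (hAB : A ≠ B) (hBC : B ≠ C) (hAC : A ≠ C) (y : ℕ → Bool) (n : ℕ) :
    EE A B C y (3 * n + 1) ≠ (if y n then C else A) ∧
    ind (EE A B C y) (if y n then C else A) (3 * n + 2) = Phi (ee y n) := by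
  constructor
  · rw [EE1]
    cases y n <;> simp [hAC, hAC.symm]
  · funext i
    unfold ind
    rcases three_cases i with rfl | ⟨c, rfl | rfl | rfl⟩
    · rw [Nat.add_zero, EE2, Phi0]
      simp
    · rw [show 3 * n + 2 + (3 * c + 1) = 3 * (n + 1 + c) by ring, EE0, Phi1]
      cases y n <;> simp [hAB.symm, hBC]
    · rw [show 3 * n + 2 + (3 * c + 2) = 3 * (n + 1 + c) + 1 by ring, EE1, Phi2]
      unfold ee
      cases y n <;> cases y (n + 1 + c) <;> simp [hAC, hAC.symm]
    · rw [show 3 * n + 2 + (3 * c + 3) = 3 * (n + 1 + c) + 2 by ring, EE2, Phi3]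
      unfold ee
      cases y n <;> cases y (n + 1 + c) <;> simp [hAC, hAC.symm]

lemma EE_period_iff {A B C : Fin 3} (hAB : A ≠ B) (hBC : B ≠ C) (hAC : A ≠ C) {y : ℕ → Bool}
    {k : ℕ} : SmallestPeriod (EE A B C y) (3 * k) ↔ SmallestPeriod y k := by
  have per : ∀ j, (∀ i, EE A B C y (i + 3 * j) = EE A B C y i) ↔ (∀ i, y (i + j) = y i) := by
    intro j
    constructor
    · intro h i
      have := h (3 * i + 1)
      rw [show 3 * i + 1 + 3 * j = 3 * (i + j) + 1 by ring, EE1, EE1] at this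
      revert this
      cases y i <;> cases y (i + j) <;> simp [hAC, hAC.symm]
    · intro h i
      unfold EE
      rw [show (i + 3 * j) % 3 = i % 3 by omega, show (i + 3 * j) / 3 = i / 3 + j by omega, h]
  constructor
  · rintro ⟨h0, h1, h2⟩
    refine ⟨by omega, (per k).1 h1, fun j hj hjm => ?_⟩
    by_contra hc
    push Not at hc
    obtain ⟨i, hi⟩ := h2 (3 * j) (by omega) (by omega)
    exact hi ((per j).2 hc i)
  · rintro ⟨h0, h1, h2⟩
    refine ⟨by omega, (per k).2 h1, fun j hj hjm => ?_⟩
    by_contra hc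
    push Not at hc
    have h3 : j % 3 = 0 := by
      have := hc 0
      rw [Nat.zero_add, show EE A B C y 0 = B from EE0 A B C y 0] at this
      by_contra hne
      rcases (by omega : j = 3 * (j / 3) + 1 ∨ j = 3 * (j / 3) + 2) with h | h
      · rw [h, EE1] at this
        revert this
        cases y (j / 3) <;> simp [hAB, hBC.symm]
      · rw [h, EE2] at this
        revert this
        cases y (j / 3) <;> simp [hAB, hBC.symm]
    obtain ⟨i, hi⟩ := h2 (j / 3) (by omega) (by omega)
    rw [show j = 3 * (j / 3) by omega] at hc
    exact hi ((per (j / 3)).1 hc i)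

lemma Phi_zero (i : ℕ) : Phi (fun _ => false) i = decide (i % 3 = 0) := by
  rcases three_cases i with rfl | ⟨c, rfl | rfl | rfl⟩
  · rfl
  · rw [Phi1]; symm; simp
  · rw [Phi2]; symm; simp
  · rw [Phi3]; symm; simp

lemma EE_upper {A B C : Fin 3} (hAB : A ≠ B) (hBC : B ≠ C) (hAC : A ≠ C) {y v : ℕ → Bool}
    (hv : v 0 = true ∨ v = fun _ => false) (h : ∀ n, ble (ee y n) v) :
    ∀ m j, EE A B C y m ≠ j → ble (ind (EE A B C y) j (m + 1)) (Phi v) := by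
  have hB : ∀ n, ble (ind (EE A B C y) B (3 * n)) (Phi v) := by
    intro n
    refine ble_trans (Or.inr ?_) (Phi_ble (zero_ble v))
    funext i
    rw [Phi_zero]
    unfold ind
    rcases (by omega : i = 3 * (i / 3) ∨ i = 3 * (i / 3) + 1 ∨ i = 3 * (i / 3) + 2) with hi | hi | hi
    · have : i % 3 = 0 := by omega
      rw [this, hi, ← Nat.mul_add, EE0]
      simp
    · have : i % 3 = 1 := by omega
      rw [this, hi, ← Nat.add_assoc, ← Nat.mul_add, EE1]
      cases y (n + i / 3) <;> simp [hAB, hBC.symm]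
    · have : i % 3 = 2 := by omega
      rw [this, hi, ← Nat.add_assoc, ← Nat.mul_add, EE2]
      cases y (n + i / 3) <;> simp [hAB, hBC.symm]
  have hd : ∀ m j, EE A B C y (m + 1) ≠ j → ble (ind (EE A B C y) j (m + 1)) (Phi v) := by
    intro m j hj
    exact Or.inl (blt_head (by simpa [ind] using hj) rfl)
  have fin3 : ∀ A B C j : Fin 3, A ≠ B → B ≠ C → A ≠ C → j = A ∨ j = B ∨ j = C := by decide
  intro m j hj
  by_cases hj' : EE A B C y (m + 1) = j
  swap
  · exact hd m j hj'
  rcases (by omega : m = 3 * (m / 3) ∨ m = 3 * (m / 3) + 1 ∨ m = 3 * (m / 3) + 2) with hm | hm | hm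
  · set n := m / 3
    rw [hm] at hj hj' ⊢
    rw [EE0] at hj
    have h12 : EE A B C y (3 * n + 2) ≠ j := by
      rw [← hj', EE1, EE2]
      cases y n <;> simp [hAC, hAC.symm]
    rcases hv with hv | hv
    · left
      refine ⟨2, fun i hi => ?_, ?_, ?_⟩
      · rcases (by omega : i = 0 ∨ i = 1) with rfl | rfl
        · simp [ind, hj', Phi0]
        · rw [show Phi v 1 = false from Phi1 v 0]
          simpa [ind] using h12
      · have := EE0 A B C y (n + 1)
        rw [show 3 * (n + 1) = 3 * n + 1 + 2 by ring] at this
        simpa [ind, this] using hj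
      · rw [show Phi v 2 = v 0 from Phi2 v 0, hv]
    · right
      subst hv
      have hz : ∀ i, y (n + i) = y n := by
        intro i
        rcases i with _ | i
        · rfl
        · have h1 := ble_antisymm (h n) (zero_ble _)
          have h2 := congrFun h1 i
          simp only [ee] at h2
          rw [show n + (i + 1) = n + 1 + i by ring]
          revert h2
          cases y n <;> cases y (n + 1 + i) <;> simp
      funext i
      rw [Phi_zero]
      unfold ind
      rcases (by omega : i = 3 * (i / 3) ∨ i = 3 * (i / 3) + 1 ∨ i = 3 * (i / 3) + 2)
        with hi | hi | hi
      · have : i % 3 = 0 := by omega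
        rw [this, hi, show 3 * n + 1 + 3 * (i / 3) = 3 * (n + i / 3) + 1 by ring, EE1, hz, ← EE1, hj']
        simp
      · have : i % 3 = 1 := by omega
        rw [this, hi, show 3 * n + 1 + (3 * (i / 3) + 1) = 3 * (n + i / 3) + 2 by ring, EE2, hz,
          ← EE2]
        simpa using h12
      · have : i % 3 = 2 := by omega
        rw [this, hi, show 3 * n + 1 + (3 * (i / 3) + 2) = 3 * (n + i / 3 + 1) by ring, EE0]
        simpa using hj
  · set n := m / 3
    rw [hm] at hj hj' ⊢
    obtain ⟨_, h2⟩ := EE_tail hAB hBC hAC y n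
    have h3 := EE2 A B C y n
    rw [show 3 * n + 1 + 1 = 3 * n + 2 by ring] at hj' ⊢
    rw [← hj', h3, h2]
    exact Phi_ble (h n)
  · rw [show m + 1 = 3 * (m / 3 + 1) by omega] at hj' ⊢
    rw [EE0] at hj'
    rw [← hj']
    exact hB _

lemma prefix_word {x t : ℕ → Bool} (h : ble x t) (m : ℕ) (hp : ∀ i < m, x i = t i)
    (ht : t m = false) : x m = false := by
  rcases h with ⟨n, hn, h1, h2⟩ | rfl
  · rcases lt_trichotomy n m with hnm | hnm | hnm
    · have := hp n hnm
      rw [h1, h2] at this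
      cases this
    · rw [← hnm]; exact h1
    · rw [hn m hnm]; exact ht
  · exact ht

lemma fin3_aux (a b c a' : Fin 3) (h1 : a ≠ b) (h2 : b ≠ c) (h3 : a ≠ c) (h4 : c ≠ a')
    (h5 : b ≠ a') : a' = a := by
  omega

set_option synthInstance.maxHeartbeats 400000 in
set_option synthInstance.maxSize 4096 in
set_option maxRecDepth 100000 in
/-- finite check on windows of nine letters -/
lemma window : ∀ x0 x1 : Fin 3, x0 ≠ x1 → ∀ x2, x1 ≠ x2 → x0 = x2 →
    ∀ x3, x2 ≠ x3 → ∀ x4, x3 ≠ x4 → ¬ (x2 = x0 ∧ x4 = x0) →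
    ∀ x5, x4 ≠ x5 → ¬ (x3 = x1 ∧ x5 = x1) → ∀ x6, x5 ≠ x6 → ¬ (x4 = x2 ∧ x6 = x2) →
    ∀ x7, x6 ≠ x7 → ¬ (x5 = x3 ∧ x7 = x3) → ¬ (x2 = x0 ∧ x5 = x0 ∧ x7 = x0) →
    ∀ x8, x7 ≠ x8 → ¬ (x6 = x4 ∧ x8 = x4) → ¬ (x3 = x1 ∧ x6 = x1 ∧ x8 = x1) →
    ¬ (x2 = x0 ∧ x5 = x0 ∧ x8 = x0) →
    x1 ≠ x3 ∧ x2 ≠ x4 ∧ (x3 = x5 ∨ (x4 ≠ x6 ∧ x5 ≠ x7 ∧ x6 = x8)) := by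
  decide

/-- structure of three-letter sequences with small tails -/
lemma structure3 {d : ℕ → Fin 3} {k : ℕ} (hd : SmallestPeriod d k) (hk : 2 ≤ k)
    (h : ∀ m j, d m ≠ j → ble (ind d j (m + 1)) (Phi (nu 0 1))) :
    ∃ p A B C y, A ≠ B ∧ B ≠ C ∧ A ≠ C ∧ sh p d = EE A B C y := by
  have hnu : ∀ j, nu 0 1 j = s0 (j % 3) := fun j => by rw [nu_odd le_rfl]
  set t := Phi (nu 0 1) with ht
  have t0 : t 0 = true := rfl
  have t1 : t 1 = false := Phi1 _ 0
  have t2 : t 2 = true := (Phi2 _ 0).trans (by rw [hnu]; rfl)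
  have t3 : t 3 = false := (Phi3 _ 0).trans (by rw [hnu]; rfl)
  have t4 : t 4 = false := Phi1 _ 1
  have t5 : t 5 = true := (Phi2 _ 1).trans (by rw [hnu]; rfl)
  have t6 : t 6 = false := (Phi3 _ 1).trans (by rw [hnu]; rfl)
  have t7 : t 7 = false := Phi1 _ 2
  have t8 : t 8 = false := (Phi2 _ 2).trans (by rw [hnu]; rfl)
  have adj : ∀ n, d n ≠ d (n + 1) := by
    intro p hp
    obtain ⟨n, hn1, hn2⟩ := exists_start hd hk hp
    have := prefix_word (h n (d (n + 1)) hn1) 1 (fun i hi => by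
      have : i = 0 := by omega
      subst this
      simp [ind, t0]) t1
    simp only [ind] at this
    rw [decide_eq_false_iff_not] at this
    exact this hn2.symm
  -- every occurrence of a letter starts a small tail
  have tail : ∀ n, ble (ind d (d n) n) t := by
    intro n
    have hk0 : k - 1 + 1 = k := by omega
    have e1 : d (n + (k - 1) + 1) = d n := by
      rw [Nat.add_assoc, hk0, hd.2.1]
    have := h (n + (k - 1)) (d n) (by rw [← e1]; exact adj _)
    have e2 : ind d (d n) (n + (k - 1) + 1) = ind d (d n) n := by
      funext i
      unfold ind
      rw [show n + (k - 1) + 1 + i = n + i + k by omega, hd.2.1]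
    rwa [e2] at this
  have f2 : ∀ n, ¬ (d (n + 2) = d n ∧ d (n + 4) = d n) := by
    rintro n ⟨h1, h2⟩
    have a0 := adj n
    have a2 := adj (n + 2)
    have := prefix_word (tail n) 4 (fun i hi => by
      interval_cases i
      · simp [ind, t0]
      · simp [ind, t1, a0.symm]
      · simp [ind, t2, h1]
      · rw [h1] at a2
        simp [ind, t3, a2.symm]) t4
    simp [ind, h2] at this
  have f3 : ∀ n, ¬ (d (n + 2) = d n ∧ d (n + 5) = d n ∧ d (n + 7) = d n) := by
    rintro n ⟨h1, h2, h3⟩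
    have a0 := adj n
    have a2 := adj (n + 2)
    have a5 := adj (n + 5)
    have a4 : d (n + 4) ≠ d n := fun hc => f2 n ⟨h1, hc⟩
    have := prefix_word (tail n) 7 (fun i hi => by
      interval_cases i
      · simp [ind, t0]
      · simp [ind, t1, a0.symm]
      · simp [ind, t2, h1]
      · rw [h1] at a2
        simp [ind, t3, a2.symm]
      · simp [ind, t4, a4]
      · simp [ind, t5, h2]
      · rw [h2] at a5
        simp [ind, t6, a5.symm]) t7
    simp [ind, h3] at this
  have f4 : ∀ n, ¬ (d (n + 2) = d n ∧ d (n + 5) = d n ∧ d (n + 8) = d n) := by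
    rintro n ⟨h1, h2, h3⟩
    have a0 := adj n
    have a2 := adj (n + 2)
    have a5 := adj (n + 5)
    have a4 : d (n + 4) ≠ d n := fun hc => f2 n ⟨h1, hc⟩
    have a7 : d (n + 7) ≠ d n := fun hc => f3 n ⟨h1, h2, hc⟩
    have := prefix_word (tail n) 8 (fun i hi => by
      interval_cases i
      · simp [ind, t0]
      · simp [ind, t1, a0.symm]
      · simp [ind, t2, h1]
      · rw [h1] at a2
        simp [ind, t3, a2.symm]
      · simp [ind, t4, a4]
      · simp [ind, t5, h2]
      · rw [h2] at a5
        simp [ind, t6, a5.symm]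
      · simp [ind, t7, a7]) t8
    simp [ind, h3] at this
  have win : ∀ n, d n = d (n + 2) → d (n + 1) ≠ d (n + 3) ∧ d (n + 2) ≠ d (n + 4) ∧
      (d (n + 3) = d (n + 5) ∨
        (d (n + 4) ≠ d (n + 6) ∧ d (n + 5) ≠ d (n + 7) ∧ d (n + 6) = d (n + 8))) := by
    intro n hn
    exact window _ _ (adj n) _ (adj (n + 1)) hn _ (adj (n + 2)) _ (adj (n + 3)) (f2 n)
      _ (adj (n + 4)) (f2 (n + 1)) _ (adj (n + 5)) (f2 (n + 2)) _ (adj (n + 6)) (f2 (n + 3))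
      (f3 n) _ (adj (n + 7)) (f2 (n + 4)) (f3 (n + 1)) (f4 n)
  have turns : ∀ s n, d n = d (n + 2) → d (n + s) = d (n + s + 2) → s % 3 = 0 := by
    intro s
    induction s using Nat.strong_induction_on with
    | _ s ih =>
      intro n h1 h2
      obtain ⟨w1, w2, w36⟩ := win n h1
      by_contra hs
      have n1 : s ≠ 1 := by rintro rfl; exact w1 h2
      have n2 : s ≠ 2 := by rintro rfl; exact w2 h2
      rcases w36 with h3 | ⟨w4, w5, h3⟩
      · have := ih (s - 3) (by omega) (n + 3) h3 (by
          rw [show n + 3 + (s - 3) = n + s by omega]; exact h2)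
        omega
      · have n4 : s ≠ 4 := by rintro rfl; exact w4 h2
        have n5 : s ≠ 5 := by rintro rfl; exact w5 h2
        have := ih (s - 6) (by omega) (n + 6) h3 (by
          rw [show n + 6 + (s - 6) = n + s by omega]; exact h2)
        omega
  have hp : ∃ p, ∀ m, d (p + m) = d (p + m + 2) → m % 3 = 2 := by
    by_cases hr : ∃ n, d n = d (n + 2)
    · obtain ⟨n, hn⟩ := hr
      refine ⟨n + 1, fun m hm => ?_⟩
      have := turns (m + 1) n hn (by
        rw [show n + (m + 1) = n + 1 + m by ring]; exact hm)
      omega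
    · push Not at hr
      exact ⟨0, fun m hm => absurd hm (hr _)⟩
  obtain ⟨p, hp⟩ := hp
  set e := sh p d with he
  have adj' : ∀ n, e n ≠ e (n + 1) := fun n => adj (p + n)
  have t01 : ∀ i, e (3 * i) ≠ e (3 * i + 2) := fun i hc => by
    have := hp (3 * i) hc
    omega
  have t12 : ∀ i, e (3 * i + 1) ≠ e (3 * i + 3) := fun i hc => by
    have := hp (3 * i + 1) hc
    omega
  have hB : ∀ i, e (3 * i) = e 0 := by
    intro i
    induction i with
    | zero => rfl
    | succ i ih =>
      rw [← ih]
      exact fin3_aux _ _ _ _ (adj' (3 * i)) (adj' (3 * i + 1)) (t01 i) (adj' (3 * i + 2)) (t12 i)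
  refine ⟨p, e 1, e 0, e 2, fun i => decide (e (3 * i + 1) = e 1), (adj' 0).symm, t01 0, adj' 1, ?_⟩
  have fin_b : ∀ A B C u v : Fin 3, A ≠ B → B ≠ C → A ≠ C → B ≠ u → u ≠ v → B ≠ v →
      (u = A → v = C) ∧ (u ≠ A → u = C ∧ v = A) := by decide
  funext i
  rw [← he]
  have hcase := fin_b (e 1) (e 0) (e 2) (e (3 * (i / 3) + 1)) (e (3 * (i / 3) + 2)) (adj' 0).symm
    (t01 0) (adj' 1) (by rw [← hB (i / 3)]; exact adj' _) (adj' _)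
    (by rw [← hB (i / 3)]; exact t01 _)
  rcases (by omega : i = 3 * (i / 3) ∨ i = 3 * (i / 3) + 1 ∨ i = 3 * (i / 3) + 2) with hi | hi | hi
  · rw [hi, EE0]
    exact hB _
  · rw [hi, EE1]
    by_cases hc : e (3 * (i / 3) + 1) = e 1
    · simp [hc]
    · have hne : ¬ (e 2 = e 1) := fun h' => adj' 1 h'.symm
      simp [(hcase.2 hc).1, hne]
  · rw [hi, EE2]
    by_cases hc : e (3 * (i / 3) + 1) = e 1
    · simp [hc, hcase.1 hc]
    · simp [hc, (hcase.2 hc).2]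

lemma lower3 (a b : ℕ) (d : ℕ → Fin 3) (hd : SmallestPeriod d (3 * (2 ^ a * (2 * b + 1)))) :
    ∃ m j, d m ≠ j ∧ ble (Phi (nu a b)) (ind d j (m + 1)) := by
  by_contra hc
  push Not at hc
  have hpos : 0 < 2 ^ a * (2 * b + 1) := by positivity
  obtain ⟨p, A, B, C, y, hAB, hBC, hAC, hy⟩ := structure3 hd (by omega) (fun m j hmj =>
    Or.inl (blt_of_blt_of_ble (blt_of_not_ble (hc m j hmj)) (Phi_ble (nu_le_three a b))))
  have hz := sh_period hd p
  rw [hy, EE_period_iff hAB hBC hAC] at hz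
  obtain ⟨n, hn⟩ := nu_lower a b y hz
  obtain ⟨h1, h2⟩ := EE_tail hAB hBC hAC y n
  rw [← hy] at h1 h2
  apply hc (p + (3 * n + 1)) _ h1
  refine ble_trans (Phi_ble hn) (Or.inr ?_)
  rw [← h2]
  funext i
  unfold ind sh
  rw [show p + (3 * n + 1) + 1 + i = p + (3 * n + 2 + i) by ring]

lemma upper3 (a b : ℕ) : ∃ d : ℕ → Fin 3, SmallestPeriod d (3 * (2 ^ a * (2 * b + 1))) ∧
    (∀ m j, d m ≠ j → ble (ind d j (m + 1)) (Phi (nu a b))) ∧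
    ∃ m j, d m ≠ j ∧ ind d j (m + 1) = Phi (nu a b) := by
  obtain ⟨y, hy, hle⟩ := nu_upper a b
  have h01 : (0 : Fin 3) ≠ 1 := by decide
  have h12 : (1 : Fin 3) ≠ 2 := by decide
  have h02 : (0 : Fin 3) ≠ 2 := by decide
  have hper := (EE_period_iff h01 h12 h02).2 hy
  have hv : nu a b 0 = true ∨ nu a b = fun _ => false := by
    by_cases h : a ≠ 0 ∨ b ≠ 0
    · exact Or.inl (nu_head h)
    · push Not at h
      obtain ⟨rfl, rfl⟩ := h
      exact Or.inr nu_zero_zero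
  have hup := EE_upper h01 h12 h02 hv hle
  refine ⟨_, hper, hup, ?_⟩
  obtain ⟨m, j, h1, h2⟩ := lower3 a b _ hper
  exact ⟨m, j, h1, ble_antisymm (hup m j h1) h2⟩

/-! ### Values of binary sequences -/

/-- value of a binary sequence with ratio `r` -/
def val (r : ℝ) (x : ℕ → Bool) : ℝ := ∑' i, if x i then r ^ (i + 1) else 0

lemma val_term_nonneg {r : ℝ} (h0 : 0 ≤ r) (x : ℕ → Bool) (i : ℕ) :
    0 ≤ (if x i then r ^ (i + 1) else 0) := by
  split_ifs <;> positivity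

lemma val_term_le {r : ℝ} (h0 : 0 ≤ r) (x : ℕ → Bool) (i : ℕ) :
    (if x i then r ^ (i + 1) else 0) ≤ r * r ^ i := by
  split_ifs
  · rw [pow_succ']
  · positivity

lemma val_summable {r : ℝ} (h0 : 0 ≤ r) (h1 : r < 1) (x : ℕ → Bool) :
    Summable (fun i => if x i then r ^ (i + 1) else 0) :=
  Summable.of_nonneg_of_le (val_term_nonneg h0 x) (val_term_le h0 x)
    ((summable_geometric_of_lt_one h0 h1).mul_left r)

lemma val_nonneg {r : ℝ} (h0 : 0 ≤ r) (x : ℕ → Bool) : 0 ≤ val r x :=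
  tsum_nonneg (val_term_nonneg h0 x)

lemma val_le {r : ℝ} (h0 : 0 ≤ r) (h1 : r < 1) (x : ℕ → Bool) : val r x ≤ r * (1 - r)⁻¹ := by
  have h := Summable.tsum_le_tsum (val_term_le h0 x) (val_summable h0 h1 x)
    ((summable_geometric_of_lt_one h0 h1).mul_left r)
  rwa [tsum_mul_left, tsum_geometric_of_lt_one h0 h1] at h

lemma val_split {r : ℝ} (h0 : 0 ≤ r) (h1 : r < 1) (x : ℕ → Bool) :
    val r x = (if x 0 then r else 0) + r * val r (sh 1 x) := by
  unfold val
  rw [(val_summable h0 h1 x).tsum_eq_zero_add, ← tsum_mul_left]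
  congr 1
  · simp
  · refine tsum_congr fun i => ?_
    rw [sh, add_comm 1 i]
    split_ifs
    · ring
    · ring

lemma val_pos {r : ℝ} (h0 : 0 < r) (h1 : r < 1) {x : ℕ → Bool} {i : ℕ} (hi : x i = true) :
    0 < val r x := by
  refine (val_summable h0.le h1 x).tsum_pos (val_term_nonneg h0.le x) i ?_
  rw [if_pos hi]; positivity

lemma sh_sh {α : Type*} (p q : ℕ) (x : ℕ → α) : sh p (sh q x) = sh (q + p) x := by
  funext i; simp [sh, add_assoc]

lemma val_agree {r : ℝ} (h0 : 0 ≤ r) (h1 : r < 1) {x v : ℕ → Bool} (m : ℕ)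
    (h : ∀ i < m, x i = v i) :
    val r v - val r x = r ^ m * (val r (sh m v) - val r (sh m x)) := by
  induction m with
  | zero =>
    have e : ∀ y : ℕ → Bool, sh 0 y = y := fun y => by funext i; simp [sh]
    simp [e]
  | succ m ih =>
    rw [ih fun i hi => h i (by omega), val_split h0 h1 (sh m v), val_split h0 h1 (sh m x), sh_sh, sh_sh]
    have e : sh m x 0 = sh m v 0 := h m (by omega)
    rw [e]; ring

lemma val_diff {r : ℝ} (h0 : 0 ≤ r) (h1 : r < 1) {x v : ℕ → Bool} {m : ℕ}
    (h : ∀ i < m, x i = v i) (hx : x m = false) (hv : v m = true) :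
    val r v - val r x = r ^ (m + 1) * (1 + val r (sh (m + 1) v) - val r (sh (m + 1) x)) := by
  rw [val_agree h0 h1 m h, val_split h0 h1 (sh m v), val_split h0 h1 (sh m x), sh_sh, sh_sh]
  have e1 : sh m x 0 = false := hx
  have e2 : sh m v 0 = true := hv
  rw [e1, e2]; simp; ring

lemma tails_le_one {r : ℝ} (h0 : 0 < r) (h1 : r < 1) {w v : ℕ → Bool} (hv : val r v ≤ 1)
    (h : ∀ n, w n = false → ble (sh (n + 1) w) v) (n : ℕ) (hn : w n = false) :
    val r (sh (n + 1) w) ≤ 1 := by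
  set C := r * (1 - r)⁻¹ with hC
  have hC0 : 0 ≤ C := mul_nonneg h0.le (inv_nonneg.2 (by linarith))
  have key : ∀ K n, w n = false → val r (sh (n + 1) w) ≤ 1 + r ^ K * C := by
    intro K
    induction K with
    | zero => intro n _; have := val_le h0.le h1 (sh (n + 1) w); rw [← hC] at this; simp; linarith
    | succ K ih =>
      intro n hn
      rcases h n hn with ⟨m, hm, hx, hy⟩ | he
      · have hd := val_diff h0.le h1 hm hx hy
        rw [sh_sh] at hd
        have hT := ih (n + 1 + m) hx
        rw [show n + 1 + m + 1 = n + 1 + (m + 1) by ring] at hT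
        have hv0 := val_nonneg h0.le (sh (m + 1) v)
        have hp : (0 : ℝ) < r ^ (m + 1) := by positivity
        have hp2 : r ^ (m + 1) ≤ r := by
          calc r ^ (m + 1) ≤ r ^ 1 := pow_le_pow_of_le_one h0.le h1.le (by omega)
            _ = r := pow_one r
        have hq : 0 ≤ r ^ K * C := by positivity
        have a1 : r ^ (m + 1) * (-(r ^ K * C)) ≤
            r ^ (m + 1) * (1 + val r (sh (m + 1) v) - val r (sh (n + 1 + (m + 1)) w)) :=
          mul_le_mul_of_nonneg_left (by linarith) hp.le
        have a2 : r ^ (m + 1) * (r ^ K * C) ≤ r * (r ^ K * C) := mul_le_mul_of_nonneg_right hp2 hq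
        rw [pow_succ']
        nlinarith
      · rw [he]
        have : 0 ≤ r ^ (K + 1) * C := by positivity
        linarith
  have ht : Tendsto (fun K : ℕ => 1 + r ^ K * C) atTop (nhds (1 + 0 * C)) :=
    ((tendsto_pow_atTop_nhds_zero_of_lt_one h0.le h1).mul_const C).const_add 1
  rw [zero_mul, add_zero] at ht
  exact ge_of_tendsto' ht fun K => key K n hn

lemma tails_le {r : ℝ} (h0 : 0 < r) (h1 : r < 1) {w v : ℕ → Bool} (hv : val r v ≤ 1)
    (h : ∀ n, w n = false → ble (sh (n + 1) w) v) (n : ℕ) (hn : w n = false) :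
    val r (sh (n + 1) w) ≤ val r v := by
  rcases h n hn with ⟨m, hm, hx, hy⟩ | he
  · have hd := val_diff h0.le h1 hm hx hy
    rw [sh_sh] at hd
    have hT := tails_le_one h0 h1 hv h (n + 1 + m) hx
    rw [show n + 1 + m + 1 = n + 1 + (m + 1) by ring] at hT
    have hv0 := val_nonneg h0.le (sh (m + 1) v)
    have hp : (0 : ℝ) < r ^ (m + 1) := by positivity
    have := mul_nonneg hp.le
      (show 0 ≤ 1 + val r (sh (m + 1) v) - val r (sh (n + 1 + (m + 1)) w) by linarith)
    linarith
  · rw [he]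

lemma tails_lt {r : ℝ} (h0 : 0 < r) (h1 : r < 1) {w v : ℕ → Bool} (hv : val r v ≤ 1)
    (hlate : ∀ N, ∃ i, N ≤ i ∧ v i = true)
    (h : ∀ n, w n = false → ble (sh (n + 1) w) v) (n : ℕ) (hn : w n = false)
    (hlt : blt (sh (n + 1) w) v) :
    val r (sh (n + 1) w) < val r v := by
  obtain ⟨m, hm, hx, hy⟩ := hlt
  have hd := val_diff h0.le h1 hm hx hy
  rw [sh_sh] at hd
  have hT := tails_le_one h0 h1 hv h (n + 1 + m) hx
  rw [show n + 1 + m + 1 = n + 1 + (m + 1) by ring] at hT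
  obtain ⟨i, hi, hvi⟩ := hlate (m + 1)
  have hv0 : 0 < val r (sh (m + 1) v) :=
    val_pos h0 h1 (i := i - (m + 1)) (by rw [sh, show m + 1 + (i - (m + 1)) = i by omega]; exact hvi)
  have hp : (0 : ℝ) < r ^ (m + 1) := by positivity
  have := mul_pos hp
    (show 0 < 1 + val r (sh (m + 1) v) - val r (sh (n + 1 + (m + 1)) w) by linarith)
  linarith

lemma Phi_late (v : ℕ → Bool) (N : ℕ) : ∃ i, N ≤ i ∧ Phi v i = true := by
  cases h : v N
  · exact ⟨3 * N + 3, by omega, by rw [Phi3, h]; rfl⟩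
  · exact ⟨3 * N + 2, by omega, by rw [Phi2, h]⟩

lemma val_contAt (x : ℕ → Bool) {b : ℝ} (hb : 1 < b) :
    ContinuousAt (fun β : ℝ => val β⁻¹ x) b := by
  have hb0 : 0 < b⁻¹ := by positivity
  have hb1 : b⁻¹ < 1 := inv_lt_one_of_one_lt₀ hb
  obtain ⟨c, hc1, hc2⟩ := exists_between hb1
  have hc0 : 0 < c := hb0.trans hc1
  have hco : ContinuousOn (fun r : ℝ => val r x) (Ioo 0 c) := by
    unfold val
    refine continuousOn_tsum (u := fun i => c * c ^ i) ?_ ?_ ?_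
    · intro i
      split_ifs
      · exact (continuous_pow _).continuousOn
      · exact continuousOn_const
    · exact (summable_geometric_of_lt_one hc0.le hc2).mul_left c
    · intro i r hr
      rw [Real.norm_of_nonneg (val_term_nonneg hr.1.le x i)]
      refine (val_term_le hr.1.le x i).trans ?_
      have := hr.1.le; have := hr.2.le
      gcongr
  have h1 : ContinuousAt (fun r : ℝ => val r x) b⁻¹ :=
    hco.continuousAt (Ioo_mem_nhds hb0 hc1)
  have h2 : ContinuousAt (fun β : ℝ => β⁻¹) b := continuousAt_inv₀ (by positivity)
  exact ContinuousAt.comp (f := fun β : ℝ => β⁻¹) (g := fun r => val r x) h1 h2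

lemma val_Phi_two (v : ℕ → Bool) : val (2 : ℝ)⁻¹ (Phi v) < 1 := by
  have h0 : (0 : ℝ) ≤ 2⁻¹ := by norm_num
  have h1 : (2 : ℝ)⁻¹ < 1 := by norm_num
  rw [val_split h0 h1, val_split h0 h1, sh_sh]
  have e : sh 1 (Phi v) 0 = false := Phi1 v 0
  have := val_le h0 h1 (sh (1 + 1) (Phi v))
  rw [e, Phi0]
  norm_num at this ⊢
  linarith

lemma val_Phi_big {r : ℝ} (h9 : 9 / 10 < r) (h1 : r < 1) (v : ℕ → Bool) : 1 < val r (Phi v) := by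
  have h0 : 0 ≤ r := by linarith
  have hv : ∃ i, (i = 2 ∨ i = 3) ∧ Phi v i = true := by
    cases h : v 0
    · exact ⟨3, by omega, by have := Phi3 v 0; rw [h] at this; exact this⟩
    · exact ⟨2, by omega, by have := Phi2 v 0; rw [h] at this; exact this⟩
  obtain ⟨i, hi, hvi⟩ := hv
  have hs := (val_summable h0 h1 (Phi v)).sum_le_tsum {0, i} (fun j _ => val_term_nonneg h0 _ j)
  rw [Finset.sum_pair (by omega), Phi0, hvi] at hs
  have h4 : r ^ 4 ≤ r ^ (i + 1) := pow_le_pow_of_le_one h0 h1.le (by omega)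
  have h5 : (9 / 10 : ℝ) ^ 4 ≤ r ^ 4 := by gcongr
  simp at hs
  norm_num at h5
  unfold val
  linarith
/-! ### Geometry of the gasket -/

/-- the three digits -/
def lam (j : Fin 3) : ℝ × ℝ := (if j = 0 then 1 else 0, if j = 1 then 1 else 0)

lemma lam_mem (j : Fin 3) : lam j ∈ OmegaR := by
  fin_cases j <;> simp [lam, OmegaR]

lemma lam_inj : Function.Injective lam := by
  intro i j h
  fin_cases i <;> fin_cases j <;> simp_all [lam]

lemma lam_surj {p : ℝ × ℝ} (h : p ∈ OmegaR) : ∃ j, lam j = p := by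
  simp only [OmegaR, mem_insert_iff, mem_singleton_iff] at h
  rcases h with rfl | rfl | rfl
  · exact ⟨2, by simp [lam]⟩
  · exact ⟨0, by simp [lam]⟩
  · exact ⟨1, by simp [lam]⟩

lemma inv_facts {β : ℝ} (hβ : 1 < β) : 0 < β⁻¹ ∧ β⁻¹ < 1 :=
  ⟨by positivity, inv_lt_one_of_one_lt₀ hβ⟩

lemma hasSum_val {r : ℝ} (h0 : 0 < r) (h1 : r < 1) (x : ℕ → Bool) :
    HasSum (fun i => if x i then r ^ (i + 1) else 0) (val r x) :=
  (val_summable h0.le h1 x).hasSum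

lemma pt_eq {β : ℝ} (hβ : 1 < β) (e : ℕ → Fin 3) (n : ℕ) :
    (∑' i : ℕ, (β ^ (i + 1))⁻¹ • lam (e (n + i))) = (val β⁻¹ (ind e 0 n), val β⁻¹ (ind e 1 n)) := by
  obtain ⟨h0, h1⟩ := inv_facts hβ
  refine HasSum.tsum_eq ?_
  have h := (hasSum_val h0 h1 (ind e 0 n)).prodMk (hasSum_val h0 h1 (ind e 1 n))
  convert h using 2 with i
  simp [lam, ind]

lemma sum3 {r : ℝ} (h0 : 0 < r) (h1 : r < 1) (e : ℕ → Fin 3) (n : ℕ) :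
    val r (ind e 0 n) + val r (ind e 1 n) + val r (ind e 2 n) = r * (1 - r)⁻¹ := by
  have h := ((hasSum_val h0 h1 (ind e 0 n)).add (hasSum_val h0 h1 (ind e 1 n))).add
    (hasSum_val h0 h1 (ind e 2 n))
  have g := (hasSum_geometric_of_lt_one h0.le h1).mul_left r
  refine h.unique ?_
  refine Eq.mp (congrArg (fun f => HasSum f _) (funext fun i => ?_)) g
  rw [← pow_succ']
  have : ∀ j : Fin 3, j = 0 ∨ j = 1 ∨ j = 2 := by decide
  rcases this (e (n + i)) with hj | hj | hj <;> simp [ind, hj]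

lemma mem_Sfat {β : ℝ} (hβ : 1 < β) (e : ℕ → Fin 3) :
    (val β⁻¹ (ind e 0 0), val β⁻¹ (ind e 1 0)) ∈ Sfat β := by
  refine ⟨fun i => lam (e i), fun i => lam_mem _, ?_⟩
  have := pt_eq hβ e 0
  simp only [zero_add] at this
  exact this.symm

lemma Delta_eq {β : ℝ} (hβ : 1 < β) (p : ℝ × ℝ) :
    p ∈ Delta β ↔ 0 ≤ p.1 ∧ 0 ≤ p.2 ∧ p.1 + p.2 ≤ β⁻¹ * (1 - β⁻¹)⁻¹ := by
  obtain ⟨h0, h1⟩ := inv_facts hβ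
  set M := β⁻¹ * (1 - β⁻¹)⁻¹ with hM
  have hM0 : 0 < M := mul_pos h0 (inv_pos.2 (by linarith))
  constructor
  · intro hp
    have hconv : Convex ℝ {p : ℝ × ℝ | 0 ≤ p.1 ∧ 0 ≤ p.2 ∧ p.1 + p.2 ≤ M} := by
      intro x hx y hy a b ha hb hab
      obtain ⟨x1, x2, x3⟩ := hx
      obtain ⟨y1, y2, y3⟩ := hy
      refine ⟨?_, ?_, ?_⟩
      · simp only [Prod.fst_add, Prod.smul_fst, smul_eq_mul]; positivity
      · simp only [Prod.snd_add, Prod.smul_snd, smul_eq_mul]; positivity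
      · simp only [Prod.fst_add, Prod.smul_fst, Prod.snd_add, Prod.smul_snd, smul_eq_mul]
        have e1 := mul_le_mul_of_nonneg_left x3 ha
        have e2 := mul_le_mul_of_nonneg_left y3 hb
        have e3 : a * M + b * M = M := by rw [← add_mul, hab, one_mul]
        linarith
    refine convexHull_min ?_ hconv hp
    rintro x ⟨d, hd, rfl⟩
    choose e he using fun i => lam_surj (hd i)
    have hpt := pt_eq hβ e 0
    simp only [zero_add, he] at hpt
    rw [hpt]
    have hs := sum3 h0 h1 e 0
    refine ⟨val_nonneg h0.le _, val_nonneg h0.le _, ?_⟩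
    have := val_nonneg h0.le (ind e 2 0)
    simp only
    linarith
  · rintro ⟨p1, p2, p3⟩
    have hc : ∀ j : Fin 3, M • lam j ∈ Delta β := by
      intro j
      have h := subset_convexHull ℝ _ (mem_Sfat hβ (fun _ => j))
      change _ ∈ Delta β at h
      have hs := sum3 h0 h1 (fun _ => j) 0
      have hz : ∀ i, j ≠ i → val β⁻¹ (ind (fun _ => j) i 0) = 0 := by
        intro i hi
        simp [val, ind, hi]
      suffices hh : M • lam j = (val β⁻¹ (ind (fun _ => j) 0 0), val β⁻¹ (ind (fun _ => j) 1 0)) by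
        rw [hh]; exact h
      have : ∀ j : Fin 3, j = 0 ∨ j = 1 ∨ j = 2 := by decide
      rcases this j with hj | hj | hj <;> subst hj
      · have a := hz 1 (by decide); have b := hz 2 (by decide)
        rw [a]; ext <;> simp [lam]; linarith
      · have a := hz 0 (by decide); have b := hz 2 (by decide)
        rw [a]; ext <;> simp [lam]; linarith
      · have a := hz 0 (by decide); have b := hz 1 (by decide)
        rw [a, b]; ext <;> simp [lam]
    have hD : Convex ℝ (Delta β) := convex_convexHull ℝ _
    have := hD.sum_mem (t := Finset.univ) (w := ![p.1 / M, p.2 / M, 1 - (p.1 + p.2) / M])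
      (z := fun j : Fin 3 => M • lam j) ?_ ?_ (fun i _ => hc i)
    · convert this using 1
      simp only [Fin.sum_univ_three]
      ext <;> simp [lam] <;> field_simp
    · intro i _
      fin_cases i
      · simp; positivity
      · simp; positivity
      · simp; rw [div_le_one hM0]; exact p3
    · simp only [Fin.sum_univ_three]
      simp; ring

lemma mem_fmap {β : ℝ} (hβ : 1 < β) (e : ℕ → Fin 3) (n : ℕ) (c : Fin 3) :
    (val β⁻¹ (ind e 0 n), val β⁻¹ (ind e 1 n)) ∈ fmap β (lam c) '' Delta β ↔
      ∀ j, (if c = j then (1 : ℝ) else 0) ≤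
        (if e n = j then 1 else 0) + val β⁻¹ (ind e j (n + 1)) := by
  obtain ⟨h0, h1⟩ := inv_facts hβ
  have hb : β * β⁻¹ = 1 := mul_inv_cancel₀ (by positivity)
  have hsp : ∀ j, β * val β⁻¹ (ind e j n) = (if e n = j then 1 else 0) + val β⁻¹ (ind e j (n + 1)) := by
    intro j
    rw [val_split h0.le h1]
    have e1 : sh 1 (ind e j n) = ind e j (n + 1) := by
      funext i; simp [sh, ind, add_assoc]
    have e2 : ind e j n 0 = decide (e n = j) := by simp [ind]
    rw [e1, e2]
    by_cases h : e n = j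
    · simp [h, mul_add, ← mul_assoc, hb]
    · simp [h, ← mul_assoc, hb]
  have hiff : (val β⁻¹ (ind e 0 n), val β⁻¹ (ind e 1 n)) ∈ fmap β (lam c) '' Delta β ↔
      β • ((val β⁻¹ (ind e 0 n), val β⁻¹ (ind e 1 n)) : ℝ × ℝ) - lam c ∈ Delta β := by
    constructor
    · rintro ⟨x, hx, hxe⟩
      rw [← hxe, fmap, smul_smul, hb, one_smul, add_sub_cancel_right]; exact hx
    · intro h
      refine ⟨_, h, ?_⟩
      rw [fmap, sub_add_cancel, smul_smul, mul_comm, hb, one_smul]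
  have hs := sum3 h0 h1 e (n + 1)
  have hall : ∀ j : Fin 3, j = 0 ∨ j = 1 ∨ j = 2 := by decide
  rw [hiff, Delta_eq hβ, ← hs]
  simp only [Prod.fst_sub, Prod.snd_sub, Prod.smul_fst, Prod.smul_snd, smul_eq_mul, hsp]
  rw [Fin.forall_fin_succ, Fin.forall_fin_two]
  simp only [Fin.succ_zero_eq_one, Fin.succ_one_eq_two]
  rcases hall c with hc | hc | hc <;> rcases hall (e n) with he | he | he <;>
    simp [hc, he, lam] <;> intros <;> (try constructor) <;> intros <;> linarith

lemma mem_Ufat {β : ℝ} (hβ : 1 < β) (e : ℕ → Fin 3) :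
    (fun i => lam (e i)) ∈ Ufat β ↔ ∀ n j, e n ≠ j → val β⁻¹ (ind e j (n + 1)) < 1 := by
  obtain ⟨h0, h1⟩ := inv_facts hβ
  have hU : (fun i => lam (e i)) ∈ Ufat β ↔
      ∀ n, (val β⁻¹ (ind e 0 n), val β⁻¹ (ind e 1 n)) ∉ Ofat β := by
    constructor
    · intro h n; rw [← pt_eq hβ]; exact h.2 n
    · intro h
      refine ⟨fun i => lam_mem _, fun n => ?_⟩
      have := h n
      rw [← pt_eq hβ] at this
      exact this
  rw [hU]
  refine forall_congr' fun n => ?_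
  have hO : (val β⁻¹ (ind e 0 n), val β⁻¹ (ind e 1 n)) ∈ Ofat β ↔
      ∃ j, e n ≠ j ∧ 1 ≤ val β⁻¹ (ind e j (n + 1)) := by
    simp only [Ofat, mem_iUnion, mem_inter_iff, exists_prop]
    constructor
    · rintro ⟨c, hc, d, hd, hcd, h⟩
      obtain ⟨c, rfl⟩ := lam_surj hc
      obtain ⟨d, rfl⟩ := lam_surj hd
      rw [mem_fmap hβ, mem_fmap hβ] at h
      by_cases hec : e n = c
      · have hed : e n ≠ d := fun h => hcd (by rw [← hec, ← h])
        refine ⟨d, hed, ?_⟩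
        have := h.2 d
        rwa [if_pos rfl, if_neg hed, zero_add] at this
      · refine ⟨c, hec, ?_⟩
        have := h.1 c
        rwa [if_pos rfl, if_neg hec, zero_add] at this
    · rintro ⟨j, hj, hv⟩
      refine ⟨lam (e n), lam_mem _, lam j, lam_mem _, fun h => hj (lam_inj h), ?_, ?_⟩
      · rw [mem_fmap hβ]
        intro i
        have := val_nonneg h0.le (ind e i (n + 1))
        linarith
      · rw [mem_fmap hβ]
        intro i
        have h2 := val_nonneg h0.le (ind e i (n + 1))
        by_cases hi : j = i
        · subst hi; rw [if_pos rfl, if_neg hj]; linarith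
        · rw [if_neg hi]; split_ifs <;> linarith
  rw [hO]
  push Not
  rfl

/-! ### The critical bases -/

lemma SP_lam {e : ℕ → Fin 3} {k : ℕ} :
    SmallestPeriod (fun i => lam (e i)) k ↔ SmallestPeriod e k := by
  simp only [SmallestPeriod, lam_inj.eq_iff, ne_eq]

/-- if `x` dominates `Phi (nu a b)` and has value at most one, so does `Phi (nu a b)` -/
lemma upper_all {r : ℝ} (h0 : 0 < r) (h1 : r < 1) {e : ℕ → Fin 3} {x : ℕ → Bool}
    (hx : val r x ≤ 1) (h : ∀ m j, e m ≠ j → ble (ind e j (m + 1)) x) (m : ℕ) (j : Fin 3)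
    (hm : e m ≠ j) : val r (ind e j (m + 1)) ≤ val r x := by
  have key : ∀ n, sh (n + 1) (ind e j 0) = ind e j (n + 1) := by
    intro n; funext i; simp [sh, ind]
  have := tails_le h0 h1 (w := ind e j 0) hx (fun n hn => by
    rw [key]; exact h n j (by simpa [ind] using hn)) m (by simpa [ind] using hm)
  rwa [key] at this

lemma upper_lt {r : ℝ} (h0 : 0 < r) (h1 : r < 1) {e : ℕ → Fin 3} {x : ℕ → Bool}
    (hx : val r x ≤ 1) (hlate : ∀ N, ∃ i, N ≤ i ∧ x i = true)
    (h : ∀ m j, e m ≠ j → ble (ind e j (m + 1)) x) (m : ℕ) (j : Fin 3)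
    (hm : e m ≠ j) (hlt : blt (ind e j (m + 1)) x) : val r (ind e j (m + 1)) < val r x := by
  have key : ∀ n, sh (n + 1) (ind e j 0) = ind e j (n + 1) := by
    intro n; funext i; simp [sh, ind]
  have := tails_lt h0 h1 (w := ind e j 0) hx hlate (fun n hn => by
    rw [key]; exact h n j (by simpa [ind] using hn)) m (by simpa [ind] using hm)
    (by rw [key]; exact hlt)
  rwa [key] at this

lemma crit_set (a b : ℕ) {β : ℝ} (hβ : 1 < β) :
    (∃ d ∈ Ufat β, SmallestPeriod d (3 * (2 ^ a * (2 * b + 1)))) ↔ val β⁻¹ (Phi (nu a b)) < 1 := by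
  obtain ⟨h0, h1⟩ := inv_facts hβ
  obtain ⟨e, he, hup, m, j, hm, hj⟩ := upper3 a b
  constructor
  · rintro ⟨d, hd, hper⟩
    choose e' he' using fun i => lam_surj (hd.1 i)
    obtain rfl : (fun i => lam (e' i)) = d := funext he'
    rw [mem_Ufat hβ] at hd
    rw [SP_lam] at hper
    obtain ⟨m', j', hm', hle⟩ := lower3 a b e' hper
    have hlt := hd m' j' hm'
    have := upper_all h0 h1 hlt.le (fun n i hn => ble_trans (hup n i hn) hle) m j hm
    rw [hj] at this
    linarith
  · intro hlt
    refine ⟨fun i => lam (e i), ?_, SP_lam.2 he⟩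
    rw [mem_Ufat hβ]
    intro n i hn
    exact (upper_all h0 h1 hlt.le hup n i hn).trans_lt hlt

lemma val_strict {a b c d : ℕ} {β : ℝ} (hβ : 1 < β) (h : blt (nu c d) (nu a b))
    (hv : val β⁻¹ (Phi (nu a b)) ≤ 1) : val β⁻¹ (Phi (nu c d)) < 1 := by
  obtain ⟨h0, h1⟩ := inv_facts hβ
  obtain ⟨e, he, hup, m, j, hm, hj⟩ := upper3 c d
  have hP := Phi_blt h
  have := upper_lt h0 h1 hv (Phi_late _)
    (fun n i hn => ble_trans (hup n i hn) (Or.inl hP)) m j hm (by rw [hj]; exact hP)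
  rw [hj] at this
  linarith

lemma betaK_eq (a b : ℕ) : betaK (3 * (2 ^ a * (2 * b + 1))) =
    sInf {β : ℝ | β ∈ Set.Ioc (1 : ℝ) 2 ∧ val β⁻¹ (Phi (nu a b)) < 1} := by
  unfold betaK
  congr 1
  ext β
  simp only [mem_ofPred_eq]
  constructor
  · rintro ⟨h1, h2⟩; exact ⟨h1, (crit_set a b h1.1).1 h2⟩
  · rintro ⟨h1, h2⟩; exact ⟨h1, (crit_set a b h1.1).2 h2⟩

lemma betaK_strict {a b c d : ℕ} (h : blt (nu c d) (nu a b)) :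
    betaK (3 * (2 ^ c * (2 * d + 1))) < betaK (3 * (2 ^ a * (2 * b + 1))) := by
  rw [betaK_eq, betaK_eq]
  set A := {β : ℝ | β ∈ Set.Ioc (1 : ℝ) 2 ∧ val β⁻¹ (Phi (nu a b)) < 1} with hA
  set B := {β : ℝ | β ∈ Set.Ioc (1 : ℝ) 2 ∧ val β⁻¹ (Phi (nu c d)) < 1} with hB
  have hne : A.Nonempty := ⟨2, ⟨by norm_num, by norm_num⟩, val_Phi_two _⟩
  have hbdA : BddBelow A := ⟨1, fun β hβ => hβ.1.1.le⟩
  have hbdB : BddBelow B := ⟨1, fun β hβ => hβ.1.1.le⟩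
  set s := sInf A with hs
  have hs1 : 1 < s := by
    have : (10 / 9 : ℝ) ≤ s := by
      refine le_csInf hne fun β hβ => ?_
      by_contra hlt
      push Not at hlt
      have hβ1 := hβ.1.1
      have : 9 / 10 < β⁻¹ := by
        rw [lt_inv_comm₀ (by norm_num) (by linarith)]; norm_num; linarith
      have := val_Phi_big this (inv_facts hβ1).2 (nu a b)
      linarith [hβ.2]
    linarith
  have hs2 : s ≤ 2 := csInf_le hbdA ⟨⟨by norm_num, by norm_num⟩, val_Phi_two _⟩
  have hcl : s ∈ closure A := csInf_mem_closure hne hbdA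
  have hle : val s⁻¹ (Phi (nu a b)) ≤ 1 := by
    by_contra hgt
    push Not at hgt
    have hev := (val_contAt (Phi (nu a b)) hs1).eventually (lt_mem_nhds hgt)
    obtain ⟨β, hβ, hβA⟩ := mem_closure_iff_nhds.1 hcl _ hev
    have h2 : 1 < val β⁻¹ (Phi (nu a b)) := hβ
    linarith [hβA.2]
  have hlt := val_strict hs1 h hle
  have hev := (val_contAt (Phi (nu c d)) hs1).eventually (gt_mem_nhds hlt)
  have hev2 : ∀ᶠ β in nhdsWithin s (Iio s), β ∈ B ∧ β < s := by
    filter_upwards [nhdsWithin_le_nhds hev, self_mem_nhdsWithin,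
      nhdsWithin_le_nhds (lt_mem_nhds hs1)] with β h1 h2 h3
    exact ⟨⟨⟨h3, (le_of_lt h2).trans hs2⟩, h1⟩, h2⟩
  obtain ⟨β, hβ, hβs⟩ := hev2.exists
  exact (csInf_le hbdB hβ).trans_lt hβs

lemma exists_decomp {k : ℕ} (hk : 1 ≤ k) : ∃ a b, k = 2 ^ a * (2 * b + 1) := by
  obtain ⟨a, m, hm, h⟩ := Nat.exists_eq_two_pow_mul_odd (n := k) (by omega)
  obtain ⟨b, rfl⟩ := hm
  exact ⟨a, b, h⟩

/-- β_{3k} > β_{3ℓ} if and only if k ⊳ ℓ in the Sharkovskii ordering. -/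
theorem stmt3 (k l : ℕ) (hk : 1 ≤ k) (hl : 1 ≤ l) :
    FatSierpinski.betaK (3 * l) < FatSierpinski.betaK (3 * k) ↔
      FatSierpinski.Sharkovskii k l := by
  have hmain : ∀ {k l : ℕ}, Sharkovskii k l → betaK (3 * l) < betaK (3 * k) := by
    rintro k l ⟨a, b, c, d, rfl, rfl, -, h⟩
    exact betaK_strict (nu_order a c b d h)
  refine ⟨fun hlt => ?_, hmain⟩
  by_contra hns
  obtain ⟨a, b, rfl⟩ := exists_decomp hk
  obtain ⟨c, d, rfl⟩ := exists_decomp hl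
  by_cases he : 2 ^ a * (2 * b + 1) = 2 ^ c * (2 * d + 1)
  · rw [he] at hlt; exact lt_irrefl _ hlt
  · have hne : ¬ (a = c ∧ b = d) := by rintro ⟨rfl, rfl⟩; exact he rfl
    have h1 : ¬ ((1 ≤ b ∧ d = 0) ∨ (1 ≤ b ∧ 1 ≤ d ∧ (a < c ∨ (a = c ∧ b < d))) ∨
      (b = 0 ∧ d = 0 ∧ c < a)) := fun h => hns ⟨a, b, c, d, rfl, rfl, he, h⟩
    have h2 : ((1 ≤ d ∧ b = 0) ∨ (1 ≤ d ∧ 1 ≤ b ∧ (c < a ∨ (c = a ∧ d < b))) ∨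
      (d = 0 ∧ b = 0 ∧ a < c)) := by omega
    exact lt_asymm hlt (hmain ⟨c, d, a, b, rfl, rfl, fun h => he h.symm, h2⟩)

end FatSierpinski
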